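/- For any two partitions λ and μ, the following identity holds in ℚ(q, Q_s, Q_t): X(λ, μ; Q_s, Q_t) = q^{−Σ_{i≥1} λ'_i μ'_i} · Q_s^{|μ|} Q_t^{|λ|} · ∏_{(i,j)∈[λ]} (q^{h_{i,j}^{λ,μ}} Q_s Q_t^{−1} − 1) · ∏_{(i,j)∈[μ]} (q^{h_{i,j}^{μ,λ}} Q_t Q_s^{−1} − 1). -/

import Mathlib

/-- A partition, encoded as a weakly decreasing, eventually-zero sequence of
natural numbers; `parts i` is the `(i+1)`-st part `λ_{i+1}` (0-indexed rows). -/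
structure Ptn where
  parts : ℕ → ℕ
  antitone' : Antitone parts
  eventually_zero : ∃ N, ∀ i, N ≤ i → parts i = 0

namespace Ptn

/-- `conj p k` is the conjugate-partition part `λ'_{k+1} = #{i ≥ 1 : λ_i ≥ k+1}`. -/
noncomputable def conj (p : Ptn) (k : ℕ) : ℕ := Nat.card {i : ℕ // k < p.parts i}

/-- `|λ| = Σ_{i ≥ 1} λ_i`. -/
noncomputable def size (p : Ptn) : ℕ := ∑ᶠ i, p.parts i

/-- `n(λ) = Σ_{i ≥ 1} (i-1) λ_i`. -/
noncomputable def nn (p : Ptn) : ℕ := ∑ᶠ i, i * p.parts i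

/-- The empty partition. -/
def empty : Ptn := ⟨fun _ => 0, fun _ _ _ => le_rfl, ⟨0, fun _ _ => rfl⟩⟩

end Ptn

/-- The generalised hook length `h_{i,j}^{λ,μ} = λ_i - i + μ'_j - j + 1`, for the node
in (0-indexed) row `i` and column `j`, i.e. the 1-indexed node `(i+1, j+1)`. -/
noncomputable def ghook (lam mu : Ptn) (i j : ℕ) : ℤ :=
  (lam.parts i : ℤ) - (i + 1) + (mu.conj j : ℤ) - (j + 1) + 1

/-- The rational function field `ℚ(q, Q_s, Q_t)` in three indeterminates. -/
noncomputable abbrev K3 : Type := FractionRing (MvPolynomial (Fin 3) ℚ)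

/-- The indeterminate `q`. -/
noncomputable def q3 : K3 := algebraMap (MvPolynomial (Fin 3) ℚ) K3 (MvPolynomial.X 0)

/-- The indeterminate `Q_s`. -/
noncomputable def Qs3 : K3 := algebraMap (MvPolynomial (Fin 3) ℚ) K3 (MvPolynomial.X 1)

/-- The indeterminate `Q_t`. -/
noncomputable def Qt3 : K3 := algebraMap (MvPolynomial (Fin 3) ℚ) K3 (MvPolynomial.X 2)

/-- The quantity `X(λ, μ; Q_s, Q_t) = ∏_{(i,j)∈[μ]} (q^{j-i} Q_t - Q_s) ·
∏_{(i,j)∈[λ]} ( (q^{j-i} Q_s - q^{μ_1} Q_t) ·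
∏_{k=1}^{μ_1} (q^{j-i} Q_s - q^{k-1-μ'_k} Q_t)/(q^{j-i} Q_s - q^{k-μ'_k} Q_t) )`. -/
noncomputable def Xst {K : Type*} [Field K] (q Qs Qt : K) (lam mu : Ptn) : K :=
  (∏ᶠ i, ∏ j ∈ Finset.range (mu.parts i), (q ^ ((j : ℤ) - (i : ℤ)) * Qt - Qs)) *
  ∏ᶠ i, ∏ j ∈ Finset.range (lam.parts i),
    ((q ^ ((j : ℤ) - (i : ℤ)) * Qs - q ^ (mu.parts 0 : ℤ) * Qt) *
      ∏ k ∈ Finset.range (mu.parts 0),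
        (q ^ ((j : ℤ) - (i : ℤ)) * Qs - q ^ (((k : ℤ) + 1) - 1 - (mu.conj k : ℤ)) * Qt) /
          (q ^ ((j : ℤ) - (i : ℤ)) * Qs - q ^ (((k : ℤ) + 1) - (mu.conj k : ℤ)) * Qt))

/-!
Every factor is, up to a sign and a power of `q`, of the form `D n = q ^ n * Q_s - Q_t`, and the
factor of `X` at a node of `λ` of content `c` is the product of `D (c - a)` over the contents `a` of
the addable nodes of `μ`, divided by the same product over its removable nodes. So the theorem
splits into a count of powers of `q` and a hook identity which holds for an arbitrary function `D`
from `ℤ` to an abelian group.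

For the hook identity, the quotient of the hook product over `μ` by its content product telescopes
down the columns of `λ` into a product of ratios, one for each node of `λ` and each row of `μ`
meeting the column of that node. Inserting the nodes of a row of `λ` one at a time produces the same
ratios: the factor of a node in column `a` splits into a part from the rows of `μ` meeting column
`a`, which are these ratios, and a part from the columns of `μ` left of `a`, which updates the hooks
of the earlier nodes in the row.
-/

namespace Ptn

open Finset

theorem lt_conj_iff (p : Ptn) (i j : ℕ) : i < p.conj j ↔ j < p.parts i := by
  classical
  have hex : ∃ n, p.parts n ≤ j := by
    obtain ⟨N, hN⟩ := p.eventually_zero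
    exact ⟨N, by simp [hN N le_rfl]⟩
  have hlt_find : ∀ i, j < p.parts i ↔ i < Nat.find hex := fun i => by
    rw [Nat.lt_find_iff]
    exact ⟨fun h m hm => not_le.2 (h.trans_le (p.antitone' hm)), fun h => not_le.1 (h i le_rfl)⟩
  have hconj : p.conj j = Nat.find hex := by
    unfold conj
    simp only [hlt_find]
    rw [Nat.card_congr Fin.equivSubtype.symm, Nat.card_fin]
  rw [hconj, hlt_find]

theorem conj_antitone (p : Ptn) : Antitone p.conj := fun a b hab => by
  by_contra! h
  rw [lt_conj_iff] at h
  exact lt_irrefl _ ((p.lt_conj_iff _ _).2 (hab.trans_lt h))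

theorem conj_eq_zero (p : Ptn) {k : ℕ} (h : p.parts 0 ≤ k) : p.conj k = 0 := by
  by_contra h0
  exact h.not_gt ((p.lt_conj_iff 0 k).1 (Nat.pos_of_ne_zero h0))

theorem parts_eq_of_mem_Ico_conj (p : Ptn) {i k : ℕ}
    (hi : i ∈ Ico (p.conj (k + 1)) (p.conj k)) : p.parts i = k + 1 := by
  rw [mem_Ico, p.lt_conj_iff, ← not_lt, p.lt_conj_iff] at hi
  omega

section Nodes

variable {M : Type*} [CommMonoid M]

/-- The set of nodes `[p]`, with rows and columns indexed from `0`. -/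
noncomputable def nodes (p : Ptn) : Finset (ℕ × ℕ) :=
  {s ∈ range (p.conj 0) ×ˢ range (p.parts 0) | s.2 < p.parts s.1}

theorem mem_nodes (p : Ptn) (s : ℕ × ℕ) : s ∈ p.nodes ↔ s.2 < p.parts s.1 := by
  simp only [nodes, mem_filter, mem_product, mem_range, lt_conj_iff, and_iff_right_iff_imp]
  exact fun h => ⟨(Nat.zero_le _).trans_lt h, h.trans_le (p.antitone' (Nat.zero_le _))⟩

@[to_additive]
theorem prod_nodes_eq_prod_rows (p : Ptn) (f : ℕ → ℕ → M) :
    ∏ s ∈ p.nodes, f s.1 s.2 = ∏ i ∈ range (p.conj 0), ∏ j ∈ range (p.parts i), f i j := by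
  refine prod_finset_product' _ _ _ fun s => ?_
  rw [mem_nodes, mem_range, mem_range, lt_conj_iff]
  exact ⟨fun h => ⟨(Nat.zero_le _).trans_lt h, h⟩, And.right⟩

@[to_additive]
theorem prod_nodes_eq_prod_columns (p : Ptn) {C : ℕ} (hC : p.parts 0 ≤ C) (f : ℕ → ℕ → M) :
    ∏ s ∈ p.nodes, f s.1 s.2 = ∏ j ∈ range C, ∏ i ∈ range (p.conj j), f i j := by
  refine prod_finset_product_right' _ _ _ fun s => ?_
  rw [mem_range, mem_range, lt_conj_iff, mem_nodes]
  exact ⟨fun h => ⟨h.trans_le ((p.antitone' (Nat.zero_le _)).trans hC), h⟩, And.right⟩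

@[to_additive]
theorem finprod_rows_eq_prod_nodes (p : Ptn) (f : ℕ → ℕ → M) :
    ∏ᶠ i, ∏ j ∈ range (p.parts i), f i j = ∏ s ∈ p.nodes, f s.1 s.2 := by
  rw [prod_nodes_eq_prod_rows]
  refine finprod_eq_prod_of_mulSupport_subset _ (Function.mulSupport_subset_iff'.2 fun i hi => ?_)
  rw [coe_range, Set.mem_Iio, lt_conj_iff, Nat.pos_iff_ne_zero, not_not] at hi
  rw [hi, range_zero, prod_empty]

@[to_additive]
theorem finprod_columns_eq_prod_nodes (p : Ptn) (f : ℕ → ℕ → M) :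
    ∏ᶠ j, ∏ i ∈ range (p.conj j), f i j = ∏ s ∈ p.nodes, f s.1 s.2 := by
  rw [p.prod_nodes_eq_prod_columns le_rfl]
  refine finprod_eq_prod_of_mulSupport_subset _ (Function.mulSupport_subset_iff'.2 fun j hj => ?_)
  rw [coe_range, Set.mem_Iio, not_lt] at hj
  rw [p.conj_eq_zero hj, range_zero, prod_empty]

theorem size_eq_card_nodes (p : Ptn) : p.size = #p.nodes := by
  simpa [size] using p.finsum_rows_eq_sum_nodes fun _ _ => (1 : ℕ)

theorem finsum_conj_mul_conj (lam mu : Ptn) :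
    ∑ᶠ k, lam.conj k * mu.conj k = ∑ s ∈ lam.nodes, mu.conj s.2 := by
  simpa using lam.finsum_columns_eq_sum_nodes fun _ j => mu.conj j

theorem prod_nodes_reverse_rows (p : Ptn) (f : ℤ → M) :
    ∏ s ∈ p.nodes, f (p.parts s.1 - s.1 - s.2 - 1) = ∏ s ∈ p.nodes, f (s.2 - s.1) := by
  rw [p.prod_nodes_eq_prod_rows fun i j => f (p.parts i - i - j - 1),
    p.prod_nodes_eq_prod_rows fun i j => f (j - i)]
  refine prod_congr rfl fun i _ => ?_
  rw [← prod_range_reflect]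
  refine prod_congr rfl fun j hj => congrArg f ?_
  rw [mem_range] at hj
  omega

theorem prod_nodes_prod_range_conj_comm (lam mu : Ptn) (f : ℕ → ℕ → ℕ → M) :
    ∏ s ∈ mu.nodes, ∏ r ∈ range (lam.conj s.2), f s.1 r s.2 =
      ∏ s ∈ lam.nodes, ∏ i ∈ range (mu.conj s.2), f i s.1 s.2 := by
  rw [mu.prod_nodes_eq_prod_columns (le_max_right (lam.parts 0) _)
      fun i j => ∏ r ∈ range (lam.conj j), f i r j,
    lam.prod_nodes_eq_prod_columns (le_max_left _ (mu.parts 0))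
      fun r j => ∏ i ∈ range (mu.conj j), f i r j]
  exact prod_congr rfl fun j _ => prod_comm

end Nodes

section BoundaryProd

/-- The product of `f` over the contents of the addable nodes of `p`, divided by the product of `f`
over the contents of its removable nodes; the factor of `X(λ, μ)` at a node of `λ` is of this form
for `p = μ`. It is encoded column by column: when `p.conj k` equals `p.conj (k + 1)`, the
denominator of column `k` cancels the next numerator. -/
noncomputable def boundaryProd {M : Type*} [DivisionCommMonoid M] (p : Ptn) (f : ℤ → M) : M :=
  f (p.parts 0) * ∏ k ∈ range (p.parts 0), f (k - p.conj k) / f (k - p.conj k + 1)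

theorem boundaryProd_zpow_mul {K : Type*} [CommGroupWithZero K] {q : K} (hq : q ≠ 0)
    (p : Ptn) (f : ℤ → K) :
    p.boundaryProd (fun n => q ^ n * f n) = p.boundaryProd f := by
  have hcolumn : ∀ k : ℕ, q ^ ((k : ℤ) - p.conj k) * f (k - p.conj k) /
      (q ^ ((k : ℤ) - p.conj k + 1) * f (k - p.conj k + 1)) =
      q⁻¹ * (f (k - p.conj k) / f (k - p.conj k + 1)) := fun k => by
    rw [zpow_add_one₀ hq, mul_assoc, mul_div_mul_left _ _ (zpow_ne_zero _ hq), div_mul_eq_div_div,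
      div_right_comm, div_eq_inv_mul]
  simp only [boundaryProd, hcolumn, prod_mul_distrib, prod_const, card_range]
  rw [zpow_natCast, inv_pow]
  field_simp

variable {G : Type*} [CommGroup G]

theorem boundaryProd_eq_mul_prod_rows (p : Ptn) (f : ℤ → G) (a : ℕ) :
    p.boundaryProd f =
      f (a - p.conj a) * (∏ k ∈ range a, f (k - p.conj k) / f (k - p.conj k + 1)) *
        ∏ i ∈ range (p.conj a), f (p.parts i - i) / f (p.parts i - i - 1) := by
  set E : ℕ → G := fun a =>
    f (a - p.conj a) * (∏ k ∈ range a, f (k - p.conj k) / f (k - p.conj k + 1)) *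
      ∏ i ∈ range (p.conj a), f (p.parts i - i) / f (p.parts i - i - 1) with hE
  -- The boundary is read by columns left of `a` and by rows above the end of column `a`; the rows
  -- ending in column `a` telescope to the factor of that column.
  have hstep : ∀ a, E (a + 1) = E a := fun a => by
    have hle : p.conj (a + 1) ≤ p.conj a := p.conj_antitone a.le_succ
    have hrows : ∏ i ∈ Ico (p.conj (a + 1)) (p.conj a), f (p.parts i - i) / f (p.parts i - i - 1) =
        f (a - p.conj (a + 1) + 1) / f (a - p.conj a + 1) := by
      rw [← inv_div_inv, ← prod_Ico_div (fun i : ℕ => (f (a - i + 1))⁻¹) hle]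
      refine prod_congr rfl fun i hi => ?_
      rw [p.parts_eq_of_mem_Ico_conj hi, inv_div_inv]
      congr 2 <;> push_cast <;> ring
    simp only [hE]
    rw [← prod_range_mul_prod_Ico _ hle, hrows, prod_range_succ, Nat.cast_succ,
      add_sub_right_comm]
    simp only [div_eq_mul_inv]
    ac_rfl
  have hconst : ∀ a, E a = E 0 := fun a => by
    induction a with
    | zero => rfl
    | succ n ih => rw [hstep, ih]
  calc p.boundaryProd f = E (p.parts 0) := by simp [hE, boundaryProd, p.conj_eq_zero le_rfl]
    _ = E a := (hconst _).trans (hconst a).symm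

end BoundaryProd

section HookIdentity

variable {G : Type*} [CommGroup G]

theorem prod_range_boundaryProd (p : Ptn) (g : ℤ → G) (r a : ℕ) :
    ∏ j ∈ range a, p.boundaryProd (fun n => g (j - r - n)) =
      (∏ j ∈ range a, g (a - r + p.conj j - j - 1)) * ∏ j ∈ range a, ∏ i ∈ range (p.conj j),
        g (j - r - (p.parts i - i)) / g (j - r - (p.parts i - i - 1)) := by
  induction a with
  | zero => simp
  | succ a ih =>
    have hshift : ∏ j ∈ range a, g ((a + 1 : ℕ) - r + p.conj j - j - 1) =
        (∏ j ∈ range a, g (a - r + p.conj j - j - 1)) * ∏ j ∈ range a,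
          g (a - r - (j - p.conj j)) / g (a - r - (j - p.conj j + 1)) := by
      rw [← prod_mul_distrib]
      refine prod_congr rfl fun j _ => ?_
      rw [← mul_div_assoc, eq_div_iff_mul_eq', mul_comm]
      congr 2 <;> push_cast <;> ring
    have hlast : g ((a + 1 : ℕ) - r + p.conj a - a - 1) = g (a - r - (a - p.conj a)) := by
      congr 1
      push_cast
      ring
    rw [prod_range_succ, ih, p.boundaryProd_eq_mul_prod_rows _ a, prod_range_succ _ a,
      prod_range_succ _ a, hshift, hlast]
    ac_rfl

theorem prod_nodes_boundaryProd (lam mu : Ptn) (g : ℤ → G) :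
    ∏ s ∈ lam.nodes, mu.boundaryProd (fun n => g (s.2 - s.1 - n)) =
      (∏ s ∈ lam.nodes, g (ghook lam mu s.1 s.2)) * ∏ s ∈ lam.nodes, ∏ i ∈ range (mu.conj s.2),
        g (s.2 - s.1 - (mu.parts i - i)) / g (s.2 - s.1 - (mu.parts i - i - 1)) := by
  rw [← prod_mul_distrib,
    lam.prod_nodes_eq_prod_rows fun r j => mu.boundaryProd (fun n => g (j - r - n)),
    lam.prod_nodes_eq_prod_rows fun r j => g (ghook lam mu r j) * ∏ i ∈ range (mu.conj j),
      g (j - r - (mu.parts i - i)) / g (j - r - (mu.parts i - i - 1))]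
  refine prod_congr rfl fun r _ => ?_
  rw [prod_range_boundaryProd, prod_mul_distrib]
  congr 1
  refine prod_congr rfl fun j _ => congrArg g ?_
  unfold ghook
  ring

theorem prod_nodes_ghook (lam mu : Ptn) (f : ℤ → G) :
    ∏ s ∈ mu.nodes, f (ghook mu lam s.1 s.2) =
      (∏ s ∈ mu.nodes, f (s.2 - s.1)) * ∏ s ∈ lam.nodes, ∏ i ∈ range (mu.conj s.2),
        f (mu.parts i - i - s.2 + s.1) / f (mu.parts i - i - s.2 + s.1 - 1) := by
  rw [← prod_nodes_prod_range_conj_comm lam mu fun i r j =>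
      f (mu.parts i - i - j + r) / f (mu.parts i - i - j + r - 1),
    ← prod_nodes_reverse_rows, ← prod_mul_distrib]
  refine prod_congr rfl fun s _ => ?_
  have htelescope : ∏ r ∈ range (lam.conj s.2),
      f (mu.parts s.1 - s.1 - s.2 + r) / f (mu.parts s.1 - s.1 - s.2 + r - 1) =
        f (ghook mu lam s.1 s.2) / f (mu.parts s.1 - s.1 - s.2 - 1) := by
    convert prod_range_div (fun r : ℕ => f (mu.parts s.1 - s.1 - s.2 + r - 1)) (lam.conj s.2)
      using 4
    · push_cast
      ring
    · unfold ghook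
      ring
    · simp
  rw [htelescope, mul_div_cancel]

theorem prod_nodes_zpow_ghook (lam mu : Ptn) (u : G) :
    ∏ s ∈ mu.nodes, u ^ ghook mu lam s.1 s.2 =
      (∏ s ∈ mu.nodes, u ^ ((s.2 : ℤ) - s.1)) * u ^ ∑ᶠ k, lam.conj k * mu.conj k := by
  have hcolumn : ∀ s : ℕ × ℕ, ∏ i ∈ range (mu.conj s.2),
      u ^ ((mu.parts i : ℤ) - i - s.2 + s.1) / u ^ ((mu.parts i : ℤ) - i - s.2 + s.1 - 1) =
        u ^ mu.conj s.2 := fun s => by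
    simp [zpow_sub_one]
  simp only [prod_nodes_ghook, hcolumn, finsum_conj_mul_conj, prod_pow_eq_pow_sum]

theorem prod_boundaryProd_mul_prod_content (lam mu : Ptn) (g : ℤ → G) :
    (∏ s ∈ lam.nodes, mu.boundaryProd (fun n => g (s.2 - s.1 - n))) *
        ∏ s ∈ mu.nodes, g (-(s.2 - s.1)) =
      (∏ s ∈ lam.nodes, g (ghook lam mu s.1 s.2)) *
        ∏ s ∈ mu.nodes, g (-ghook mu lam s.1 s.2) := by
  rw [prod_nodes_boundaryProd, prod_nodes_ghook lam mu fun n => g (-n), mul_assoc]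
  congr 1
  rw [mul_comm]
  congr 1
  refine prod_congr rfl fun s _ => prod_congr rfl fun i _ => ?_
  congr 2 <;> ring

theorem prod_boundaryProd_mul_prod_content_of_ne_zero {K : Type*} [CommGroupWithZero K]
    {g : ℤ → K} (hg : ∀ n, g n ≠ 0) (lam mu : Ptn) :
    (∏ s ∈ lam.nodes, mu.boundaryProd (fun n => g (s.2 - s.1 - n))) *
        ∏ s ∈ mu.nodes, g (-(s.2 - s.1)) =
      (∏ s ∈ lam.nodes, g (ghook lam mu s.1 s.2)) *
        ∏ s ∈ mu.nodes, g (-ghook mu lam s.1 s.2) := by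
  simpa [boundaryProd] using congrArg Units.val
    (prod_boundaryProd_mul_prod_content lam mu fun n => Units.mk0 (g n) (hg n))

end HookIdentity

end Ptn

section Field

open Ptn Finset

variable {K : Type*} [Field K] {q x y : K}

theorem Xst_eq_prod_nodes (hq : q ≠ 0) (lam mu : Ptn) :
    Xst q x y lam mu = (∏ s ∈ mu.nodes, (q ^ ((s.2 : ℤ) - s.1) * y - x)) *
      ∏ s ∈ lam.nodes, mu.boundaryProd (fun n => q ^ ((s.2 : ℤ) - s.1 - n) * x - y) := by
  have hnode : ∀ c : ℤ, mu.boundaryProd (fun n => q ^ (c - n) * x - y) =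
      mu.boundaryProd (fun n => q ^ c * x - q ^ n * y) := fun c => by
    rw [← boundaryProd_zpow_mul hq]
    congr 1 with n
    rw [mul_sub, ← mul_assoc, ← zpow_add₀ hq, add_sub_cancel]
  unfold Xst
  rw [finprod_rows_eq_prod_nodes, finprod_rows_eq_prod_nodes]
  simp only [hnode]
  simp only [boundaryProd, add_sub_cancel_right, sub_add_eq_add_sub]

theorem pow_size_mul_finprod_rows (p : Ptn) (hy : y ≠ 0) (e : ℕ → ℕ → ℤ) :
    y ^ p.size * ∏ᶠ i, ∏ j ∈ range (p.parts i), (q ^ e i j * x * y⁻¹ - 1) =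
      ∏ s ∈ p.nodes, (q ^ e s.1 s.2 * x - y) := by
  rw [finprod_rows_eq_prod_nodes, size_eq_card_nodes, ← prod_const, ← prod_mul_distrib]
  refine prod_congr rfl fun s _ => ?_
  field_simp

theorem zpow_mul_sub_eq_neg_zpow_mul (hq : q ≠ 0) (n : ℤ) :
    q ^ n * y - x = -q ^ n * (q ^ (-n) * x - y) := by
  rw [mul_sub, ← mul_assoc, neg_mul, ← zpow_add₀ hq, add_neg_cancel, zpow_zero]
  ring

theorem prod_nodes_neg_zpow_ghook (hq : q ≠ 0) (lam mu : Ptn) :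
    ∏ s ∈ mu.nodes, -q ^ ghook mu lam s.1 s.2 =
      (∏ s ∈ mu.nodes, -q ^ ((s.2 : ℤ) - s.1)) * q ^ ∑ᶠ k, lam.conj k * mu.conj k := by
  have hzpow := congrArg Units.val (prod_nodes_zpow_ghook lam mu (Units.mk0 q hq))
  push_cast [Units.val_mk0] at hzpow
  rw [prod_neg, prod_neg, hzpow, mul_assoc]

theorem stmt5_general (hq : q ≠ 0) (hx : x ≠ 0) (hy : y ≠ 0) (h : ∀ n : ℤ, q ^ n * x ≠ y)
    (lam mu : Ptn) :
    Xst q x y lam mu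
    = q ^ (-((∑ᶠ k, lam.conj k * mu.conj k : ℕ) : ℤ)) * x ^ mu.size * y ^ lam.size *
        (∏ᶠ i, ∏ j ∈ range (lam.parts i), (q ^ (ghook lam mu i j) * x * y⁻¹ - 1)) *
        (∏ᶠ i, ∏ j ∈ range (mu.parts i), (q ^ (ghook mu lam i j) * y * x⁻¹ - 1)) := by
  set D : ℤ → K := fun n => q ^ n * x - y with hD
  set N : ℕ := ∑ᶠ k, lam.conj k * mu.conj k with hN
  have hflip : ∀ n, q ^ n * y - x = -q ^ n * D (-n) := zpow_mul_sub_eq_neg_zpow_mul hq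
  have hhook := prod_boundaryProd_mul_prod_content_of_ne_zero (g := D)
    (fun n => sub_ne_zero.2 (h n)) lam mu
  calc Xst q x y lam mu
      = (∏ s ∈ mu.nodes, -q ^ ((s.2 : ℤ) - s.1)) *
          ((∏ s ∈ lam.nodes, mu.boundaryProd (fun n => D (s.2 - s.1 - n))) *
            ∏ s ∈ mu.nodes, D (-(s.2 - s.1))) := by
        simp only [Xst_eq_prod_nodes hq, hflip, prod_mul_distrib]
        ring
    _ = q ^ (-(N : ℤ)) * (∏ s ∈ lam.nodes, D (ghook lam mu s.1 s.2)) *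
          ((∏ s ∈ mu.nodes, -q ^ ghook mu lam s.1 s.2) *
            ∏ s ∈ mu.nodes, D (-ghook mu lam s.1 s.2)) := by
        rw [hhook, prod_nodes_neg_zpow_ghook hq lam mu, ← hN, zpow_neg, zpow_natCast]
        field_simp
    _ = q ^ (-(N : ℤ)) * (∏ s ∈ lam.nodes, (q ^ ghook lam mu s.1 s.2 * x - y)) *
          ∏ s ∈ mu.nodes, (q ^ ghook mu lam s.1 s.2 * y - x) := by
        simp only [hflip, prod_mul_distrib, hD]
    _ = _ := by
        rw [← pow_size_mul_finprod_rows lam hy, ← pow_size_mul_finprod_rows mu hx]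
        ring

end Field

section Indeterminates

open MvPolynomial

variable {σ R K : Type*} [CommRing R] [Nontrivial R] [Field K] [Algebra (MvPolynomial σ R) K]
  [IsFractionRing (MvPolynomial σ R) K]

theorem algebraMap_X_ne_zero (i : σ) : algebraMap (MvPolynomial σ R) K (X i) ≠ 0 :=
  (map_ne_zero_iff _ (IsFractionRing.injective _ _)).2 (X_ne_zero i)

theorem algebraMap_X_zpow_mul_algebraMap_X_ne {i j k : σ} (hij : i ≠ j) (hjk : j ≠ k) (n : ℤ) :
    algebraMap (MvPolynomial σ R) K (X i) ^ n * algebraMap (MvPolynomial σ R) K (X j) ≠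
      algebraMap (MvPolynomial σ R) K (X k) := by
  classical
  intro h
  have hpoly : (X i ^ n.toNat * X j : MvPolynomial σ R) = X i ^ (-n).toNat * X k := by
    apply IsFractionRing.injective (MvPolynomial σ R) K
    have hX : algebraMap (MvPolynomial σ R) K (X i) ≠ 0 := algebraMap_X_ne_zero i
    rw [← Int.toNat_sub_toNat_neg n, zpow_sub₀ hX, zpow_natCast, zpow_natCast, div_mul_eq_mul_div,
      div_eq_iff (pow_ne_zero _ hX)] at h
    simpa only [map_mul, map_pow, mul_comm] using h
  have heval := congrArg (eval fun l => if l = j then (0 : R) else 1) hpoly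
  simp [hij, hjk.symm] at heval

end Indeterminates

/-- For any two partitions `λ, μ`, in `ℚ(q, Q_s, Q_t)`:
`X(λ,μ;Q_s,Q_t) = q^{-Σ_i λ'_i μ'_i} Q_s^{|μ|} Q_t^{|λ|}
  ∏_{(i,j)∈[λ]} (q^{h^{λ,μ}_{i,j}} Q_s Q_t⁻¹ - 1) ∏_{(i,j)∈[μ]} (q^{h^{μ,λ}_{i,j}} Q_t Q_s⁻¹ - 1)`. -/
theorem stmt5 (lam mu : Ptn) :
    Xst q3 Qs3 Qt3 lam mu
    = q3 ^ (-((∑ᶠ k, lam.conj k * mu.conj k : ℕ) : ℤ)) * Qs3 ^ mu.size * Qt3 ^ lam.size *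
        (∏ᶠ i, ∏ j ∈ Finset.range (lam.parts i), (q3 ^ (ghook lam mu i j) * Qs3 * Qt3⁻¹ - 1)) *
        (∏ᶠ i, ∏ j ∈ Finset.range (mu.parts i), (q3 ^ (ghook mu lam i j) * Qt3 * Qs3⁻¹ - 1)) :=
  stmt5_general (algebraMap_X_ne_zero 0) (algebraMap_X_ne_zero 1) (algebraMap_X_ne_zero 2)
    (algebraMap_X_zpow_mul_algebraMap_X_ne (by decide) (by decide)) lam mu
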